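/- arXiv:1602.01275 — 4 statements merged into one kernel-verified Lean document; each statement's English description precedes it below -/
import Mathlib

section
/- Let (X,d) be a metric space and let (S_t)_{t≥0} be a semigroup of maps S_t : X → X (i.e. S_0 = id and S_{t+s} = S_t ∘ S_s for all t,s ≥ 0) satisfying d(S_t x₁, S_t x₂) ≤ C e^{K t} d(x₁,x₂) for all t ≥ 0 and all x₁,x₂ ∈ X, for some constants C > 0 and K > 0. Assume U₁, U₂, U₃ are nonempty subsets of X such that dist_X(S_t U₁, U₂) ≤ C₁ e^{−α₁ t} and dist_X(S_t U₂, U₃) ≤ C₂ e^{−α₂ t} for all t ≥ 0, where C₁, C₂ ≥ 0 and α₁, α₂ > 0. Then for all t ≥ 0, dist_X(S_t U₁, U₃) ≤ C′ e^{−α′ t}, where C′ = C·C₁ + C₂ and α′ = α₁α₂/(K + α₁ + α₂). -/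
open Metric Real

/-- **Transitivity of exponential attraction.**
Let `(X,d)` be a metric space and `(S_t)` a semigroup on `X` satisfying
`d(S_t x₁, S_t x₂) ≤ C e^{Kt} d(x₁,x₂)`.  If `dist(S_t U₁, U₂) ≤ C₁ e^{-α₁ t}` and
`dist(S_t U₂, U₃) ≤ C₂ e^{-α₂ t}`, then `dist(S_t U₁, U₃) ≤ (C C₁ + C₂) e^{-α' t}` with
`α' = α₁ α₂ / (K + α₁ + α₂)`.  The one-sided Hausdorff semidistance
`dist_X(A,B) = sup_{a ∈ A} inf_{b ∈ B} d(a,b)` is expressed pointwise: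
`dist_X(A,B) ≤ r ↔ ∀ a ∈ A, infDist a B ≤ r` (for nonempty sets). -/
theorem transitivity_of_exponential_attraction
    {X : Type*} [MetricSpace X]
    (S : ℝ → X → X)
    (hS0 : S 0 = id)
    (hSsemi : ∀ t s : ℝ, 0 ≤ t → 0 ≤ s → S (t + s) = S t ∘ S s)
    (C K : ℝ) (hC : 0 < C) (hK : 0 < K)
    (hLip : ∀ t : ℝ, 0 ≤ t → ∀ x₁ x₂ : X,
      dist (S t x₁) (S t x₂) ≤ C * Real.exp (K * t) * dist x₁ x₂)
    (U₁ U₂ U₃ : Set X) (hU₁ : U₁.Nonempty) (hU₂ : U₂.Nonempty) (hU₃ : U₃.Nonempty)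
    (C₁ C₂ : ℝ) (hC₁ : 0 ≤ C₁) (hC₂ : 0 ≤ C₂)
    (α₁ α₂ : ℝ) (hα₁ : 0 < α₁) (hα₂ : 0 < α₂)
    (h12 : ∀ t : ℝ, 0 ≤ t → ∀ x ∈ U₁, infDist (S t x) U₂ ≤ C₁ * Real.exp (-α₁ * t))
    (h23 : ∀ t : ℝ, 0 ≤ t → ∀ x ∈ U₂, infDist (S t x) U₃ ≤ C₂ * Real.exp (-α₂ * t)) :
    ∀ t : ℝ, 0 ≤ t → ∀ x ∈ U₁,
      infDist (S t x) U₃ ≤ (C * C₁ + C₂) * Real.exp (-(α₁ * α₂ / (K + α₁ + α₂)) * t) := by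
  intro t ht x hx
  have hD : 0 < K + α₁ + α₂ := by positivity
  obtain ⟨s, hs⟩ : ∃ s, s = α₁ / (K + α₁ + α₂) * t := ⟨_, rfl⟩
  obtain ⟨r, hr⟩ : ∃ r, r = (K + α₂) / (K + α₁ + α₂) * t := ⟨_, rfl⟩
  have hs0 : 0 ≤ s := by rw [hs]; positivity
  have hr0 : 0 ≤ r := by rw [hr]; positivity
  have hsr : t = s + r := by rw [hs, hr]; field_simp; ring
  have e2 : -α₂ * s = -(α₁ * α₂ / (K + α₁ + α₂)) * t := by
    rw [hs]; field_simp
  have e1 : K * s + -α₁ * r = -(α₁ * α₂ / (K + α₁ + α₂)) * t := by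
    rw [hs, hr]; field_simp; ring
  have hM : 0 < C * Real.exp (K * s) := by positivity
  refine le_of_forall_pos_le_add fun ε hε => ?_
  have hlt : infDist (S r x) U₂ < C₁ * Real.exp (-α₁ * r) + ε / (C * Real.exp (K * s)) :=
    lt_of_le_of_lt (h12 r hr0 x hx) (lt_add_of_pos_right _ (by positivity))
  obtain ⟨y, hy, hxy⟩ := (infDist_lt_iff hU₂).1 hlt
  have hst : S t x = S s (S r x) := by
    rw [hsr, hSsemi s r hs0 hr0]; rfl
  rw [hst]
  calc infDist (S s (S r x)) U₃ ≤ infDist (S s y) U₃ + dist (S s (S r x)) (S s y) :=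
        infDist_le_infDist_add_dist
    _ ≤ C₂ * Real.exp (-α₂ * s) + C * Real.exp (K * s) *
          (C₁ * Real.exp (-α₁ * r) + ε / (C * Real.exp (K * s))) :=
        add_le_add (h23 s hs0 y hy)
          ((hLip s hs0 _ _).trans (mul_le_mul_of_nonneg_left hxy.le hM.le))
    _ = C₂ * Real.exp (-α₂ * s) + C * C₁ * Real.exp (K * s + -α₁ * r) + ε := by
        rw [mul_add, mul_div_cancel₀ _ hM.ne', Real.exp_add]; ring
    _ = _ := by rw [e1, e2]; ring
end

section
/- Let Λ : [0,∞) → [0,∞) be absolutely continuous, let η > 0, k ≥ 0, m ≥ 0, and let h : [0,∞) → ℝ be measurable and locally integrable with ∫_s^t h(τ) dτ ≤ η(t−s) + m for all t ≥ s ≥ 0. If Λ′(t) + 2η Λ(t) ≤ h(t) Λ(t) + k for almost every t ≥ 0, then for all t ≥ 0, Λ(t) ≤ Λ(0) e^m e^{−η t} + k e^m / η. -/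
open MeasureTheory Real

/-- A function whose increments are dominated by those of an absolutely continuous one
is absolutely continuous. -/
theorem ac_of_dist_le {f g : ℝ → ℝ} {a b K : ℝ} (hf : AbsolutelyContinuousOnInterval f a b)
    (hg : ∀ x ∈ Set.uIcc a b, ∀ y ∈ Set.uIcc a b, dist (g x) (g y) ≤ K * dist (f x) (f y)) :
    AbsolutelyContinuousOnInterval g a b := by
  unfold AbsolutelyContinuousOnInterval at hf ⊢
  apply squeeze_zero' ?_ ?_ (by simpa using hf.const_mul K)
  · exact Filter.Eventually.of_forall fun _ => Finset.sum_nonneg (fun i hi => dist_nonneg)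
  rw [Filter.eventually_inf_principal]
  filter_upwards with E hE
  rw [Finset.mul_sum]
  exact Finset.sum_le_sum fun i hi => hg _ (hE.1 i hi).1 _ (hE.1 i hi).2

theorem ac_exp {f : ℝ → ℝ} {a b : ℝ} (hf : AbsolutelyContinuousOnInterval f a b) :
    AbsolutelyContinuousOnInterval (fun x => Real.exp (f x)) a b := by
  obtain ⟨C, hC⟩ := hf.exists_bound
  have key : ∀ u v : ℝ, u ≤ C → Real.exp u - Real.exp v ≤ Real.exp C * |u - v| := by
    intro u v hu
    have h1 : Real.exp v = Real.exp u * Real.exp (v - u) := by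
      rw [← Real.exp_add]; congr 1; ring
    have h2 := Real.add_one_le_exp (v - u)
    have h3 : Real.exp u ≤ Real.exp C := Real.exp_le_exp.2 hu
    have h4 := Real.exp_pos u
    calc Real.exp u - Real.exp v = Real.exp u * (1 - Real.exp (v - u)) := by rw [h1]; ring
      _ ≤ Real.exp u * |u - v| :=
        mul_le_mul_of_nonneg_left (by linarith [le_abs_self (u - v)]) h4.le
      _ ≤ _ := mul_le_mul_of_nonneg_right h3 (abs_nonneg _)
  refine ac_of_dist_le (K := Real.exp C) hf fun x hx y hy => ?_
  have hx' := (le_abs_self _).trans (hC x hx)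
  have hy' := (le_abs_self _).trans (hC y hy)
  rw [Real.dist_eq, Real.dist_eq, abs_le]
  have h1 := key _ (f y) hx'
  have h2 := key _ (f x) hy'
  rw [abs_sub_comm] at h2
  constructor <;> linarith

/-- **A Grönwall-type inequality.**
Let `Λ : [0,∞) → [0,∞)` be absolutely continuous (encoded here by: `Λ'` is locally
integrable, `Λ` satisfies the fundamental theorem of calculus with density `Λ'`, and
`Λ' ` is the derivative of `Λ` a.e.), let `η > 0`, `k ≥ 0`, `m ≥ 0`, and let
`h` be measurable and locally integrable with `∫_s^t h ≤ η (t-s) + m` for all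
`t ≥ s ≥ 0`.  If `Λ'(t) + 2ηΛ(t) ≤ h(t)Λ(t) + k` for a.e. `t ≥ 0`, then
`Λ(t) ≤ Λ(0) e^m e^{-ηt} + k e^m / η` for all `t ≥ 0`. -/
theorem gronwall_type_inequality
    (Λ Λ' h : ℝ → ℝ)
    (η k m : ℝ) (hη : 0 < η) (hk : 0 ≤ k) (hm : 0 ≤ m)
    (hΛnonneg : ∀ t : ℝ, 0 ≤ t → 0 ≤ Λ t)
    (hΛ'int : ∀ T : ℝ, 0 ≤ T → IntegrableOn Λ' (Set.Icc 0 T))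
    (hFTC : ∀ t : ℝ, 0 ≤ t → Λ t = Λ 0 + ∫ τ in (0:ℝ)..t, Λ' τ)
    (hderiv : ∀ᵐ t : ℝ, 0 ≤ t → HasDerivAt Λ (Λ' t) t)
    (hmeas : Measurable h)
    (hloc : ∀ T : ℝ, 0 ≤ T → IntegrableOn h (Set.Icc 0 T))
    (hint : ∀ s t : ℝ, 0 ≤ s → s ≤ t → (∫ τ in s..t, h τ) ≤ η * (t - s) + m)
    (hdiff : ∀ᵐ t : ℝ, 0 ≤ t → Λ' t + 2 * η * Λ t ≤ h t * Λ t + k) :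
    ∀ t : ℝ, 0 ≤ t →
      Λ t ≤ Λ 0 * Real.exp m * Real.exp (-η * t) + k * Real.exp m / η := by
  intro T hT
  have huI : Set.uIcc 0 T = Set.Icc 0 T := Set.uIcc_of_le hT
  have hh : IntervalIntegrable h volume 0 T :=
    (intervalIntegrable_iff_integrableOn_Icc_of_le hT).2 (hloc T hT)
  have hL : IntervalIntegrable Λ' volume 0 T :=
    (intervalIntegrable_iff_integrableOn_Icc_of_le hT).2 (hΛ'int T hT)
  have hΛac : AbsolutelyContinuousOnInterval Λ 0 T := by
    refine ac_of_dist_le (K := 1)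
      (hL.absolutelyContinuousOnInterval_intervalIntegral (c := 0) (by simp)) fun x hx y hy => ?_
    rw [huI] at hx hy
    rw [hFTC x hx.1, hFTC y hy.1, dist_add_left, one_mul]
  have hHac := hh.absolutelyContinuousOnInterval_intervalIntegral (c := T) (by simp)
  have hlin : AbsolutelyContinuousOnInterval (fun s : ℝ => 2 * η * (s - T)) 0 T :=
    ContDiffOn.absolutelyContinuousOnInterval (by fun_prop)
  have hEac := ac_exp (hlin.fun_sub hHac)
  have hPac : AbsolutelyContinuousOnInterval
      (fun s : ℝ => k * Real.exp m / η * Real.exp (η * (s - T))) 0 T :=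
    ContDiffOn.absolutelyContinuousOnInterval (by fun_prop)
  have hFac := (hEac.fun_mul hΛac).fun_sub hPac
  have hFT := hFac.integral_deriv_eq_sub
  have hEb : ∀ s ∈ Set.Icc 0 T, Real.exp (2 * η * (s - T) - ∫ v in T..s, h v) ≤
      Real.exp m * Real.exp (η * (s - T)) := by
    intro s hs
    rw [← Real.exp_add, Real.exp_le_exp, intervalIntegral.integral_symm]
    have := hint s T hs.1 hs.2
    linarith
  have hneg : 0 ≤ ∫ x in (0:ℝ)..T, -deriv (fun s => Real.exp (2 * η * (s - T) - ∫ v in T..s, h v)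
      * Λ s - k * Real.exp m / η * Real.exp (η * (s - T))) x := by
    apply intervalIntegral.integral_nonneg_of_ae_restrict hT
    rw [Filter.EventuallyLE, ae_restrict_iff' measurableSet_Icc]
    filter_upwards [hderiv, hdiff, hh.ae_hasDerivAt_integral] with x h1 h2 h3 hx
    have d1 := h1 hx.1
    have d3 := h3 (huI ▸ hx) T (by simp)
    have dl : HasDerivAt (fun s : ℝ => 2 * η * (s - T)) (2 * η) x := by
      simpa using ((hasDerivAt_id x).sub_const T).const_mul (2 * η)
    have dl' : HasDerivAt (fun s : ℝ => η * (s - T)) η x := by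
      simpa using ((hasDerivAt_id x).sub_const T).const_mul η
    have dF := ((dl.fun_sub d3).exp.fun_mul d1).fun_sub
      (dl'.exp.const_mul (k * Real.exp m / η))
    rw [dF.deriv]
    have e1 := hEb x hx
    have e2 := mul_le_mul_of_nonneg_left (h2 hx.1)
      (Real.exp_pos (2 * η * (x - T) - ∫ v in T..x, h v)).le
    have e3 := mul_le_mul_of_nonneg_left e1 hk
    have e4 : k * Real.exp m / η * (Real.exp (η * (x - T)) * η) =
        k * (Real.exp m * Real.exp (η * (x - T))) := by field_simp
    rw [e4]
    simp only [Pi.zero_apply]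
    linarith
  rw [intervalIntegral.integral_neg, hFT] at hneg
  have e0 := mul_le_mul_of_nonneg_right (hEb 0 ⟨le_rfl, hT⟩) (hΛnonneg 0 le_rfl)
  have e5 : 0 ≤ k * Real.exp m / η * Real.exp (η * (0 - T)) := by positivity
  have e6 : η * (0 - T) = -η * T := by ring
  simp only [sub_self, mul_zero, intervalIntegral.integral_same, Real.exp_zero, one_mul,
    mul_one] at hneg
  rw [e6] at e0 e5 hneg
  linarith
end

section
/- Let H be a real Hilbert space, ε ∈ (0,1], ρ > 0, and let U : [0,∞) → H satisfy ‖U(t)‖_H ≤ ρ for all t ≥ 0. Let Φ₀ : (0,∞) → H be differentiable with ∫₀^∞ μ_ε(s)‖Φ₀′(s)‖²_H ds < ∞, and for t ≥ 0 define D^t : (0,∞) → H by D^t(s) = U(t−s) for 0 < s ≤ t and D^t(s) = Φ₀′(s−t) for s > t (the s-derivative of the integrated past history Φ^t). Then for all t ≥ 0, ε ∫₀^∞ μ_ε(s) ‖D^t(s)‖²_H ds ≤ ε e^{−δ t} ∫₀^∞ μ_ε(s) ‖Φ₀′(s)‖²_H ds + ρ² ‖μ‖_{L¹((0,∞))}.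 -/
open MeasureTheory Real Set ENNReal

theorem kernel_exp_decay (δ : ℝ) (μ : ℝ → ℝ)
    (hμC1 : ContDiffOn ℝ 1 μ (Ioi 0))
    (hμdecay : ∀ s : ℝ, 0 < s → deriv μ s + δ * μ s ≤ 0)
    (s h : ℝ) (hs : 0 < s) (hh : 0 ≤ h) : μ (s + h) ≤ Real.exp (-δ * h) * μ s := by
  have hd : ∀ x : ℝ, 0 < x → HasDerivAt μ (deriv μ x) x := fun x hx =>
    ((hμC1.differentiableOn (by norm_num)).differentiableAt (Ioi_mem_nhds hx)).hasDerivAt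
  have hg : ∀ x : ℝ, 0 < x → HasDerivAt (fun x => Real.exp (δ * x) * μ x)
      (Real.exp (δ * x) * (δ * 1) * μ x + Real.exp (δ * x) * deriv μ x) x := fun x hx =>
    (((hasDerivAt_id x).const_mul δ).exp).mul (hd x hx)
  have hanti : AntitoneOn (fun x => Real.exp (δ * x) * μ x) (Ioi 0) := by
    apply antitoneOn_of_deriv_nonpos (convex_Ioi 0)
    · exact fun x hx => (hg x hx).continuousAt.continuousWithinAt
    · rw [interior_Ioi]
      exact fun x hx => (hg x hx).differentiableAt.differentiableWithinAt
    · rw [interior_Ioi]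
      intro x hx
      rw [(hg x hx).deriv]
      have h1 := mul_nonpos_of_nonneg_of_nonpos (Real.exp_pos (δ * x)).le (hμdecay x hx)
      linarith
  have h1 := hanti (show s ∈ Ioi (0:ℝ) from hs) (show s + h ∈ Ioi (0:ℝ) from by
    simp only [mem_Ioi]; linarith) (by linarith)
  simp only at h1
  have h2 : Real.exp (δ * (s + h)) = Real.exp (δ * s) * Real.exp (δ * h) := by
    rw [← Real.exp_add]; ring_nf
  have h3 : Real.exp (-δ * h) * Real.exp (δ * h) = 1 := by
    rw [← Real.exp_add]; ring_nf; simp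
  rw [h2, mul_assoc] at h1
  have h4 := le_of_mul_le_mul_left h1 (Real.exp_pos _)
  calc μ (s + h) = Real.exp (-δ * h) * (Real.exp (δ * h) * μ (s + h)) := by
        rw [← mul_assoc, h3, one_mul]
    _ ≤ _ := mul_le_mul_of_nonneg_left h4 (Real.exp_pos _).le

/-- **Decay of the `s`-derivative of the integrated past history.**
With memory kernel `μ` (nonnegative, nonincreasing, `C¹`, integrable on `(0,∞)`,
satisfying `μ' + δμ ≤ 0`), rescaled kernel `μ_ε(s) = ε⁻² μ(s/ε)`, a trajectory `U`
bounded by `ρ`, and past-history datum `Φ₀` with `∫ μ_ε ‖Φ₀'‖² < ∞`, the function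
`D^t(s) = U(t-s)` for `0 < s ≤ t`, `D^t(s) = Φ₀'(s-t)` for `s > t` (the `s`-derivative
of the integrated past history) satisfies
`ε ∫ μ_ε ‖D^t‖² ≤ ε e^{-δt} ∫ μ_ε ‖Φ₀'‖² + ρ² ‖μ‖_{L¹}` for all `t ≥ 0`. -/
theorem history_derivative_decay
    {H : Type*} [NormedAddCommGroup H] [InnerProductSpace ℝ H] [CompleteSpace H]
    (δ : ℝ) (hδ : 0 < δ)
    (μ : ℝ → ℝ)
    (hμnonneg : ∀ s : ℝ, 0 < s → 0 ≤ μ s)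
    (hμanti : ∀ s t : ℝ, 0 < s → s ≤ t → μ t ≤ μ s)
    (hμC1 : ContDiffOn ℝ 1 μ (Ioi 0))
    (hμint : IntegrableOn μ (Ioi 0))
    (hμdecay : ∀ s : ℝ, 0 < s → deriv μ s + δ * μ s ≤ 0)
    (ε : ℝ) (hε : ε ∈ Ioc (0:ℝ) 1)
    (ρ : ℝ) (hρ : 0 < ρ)
    (U : ℝ → H) (hU : ∀ t : ℝ, 0 ≤ t → ‖U t‖ ≤ ρ)
    (Φ₀ Φ₀' : ℝ → H)
    (hΦ₀deriv : ∀ s : ℝ, 0 < s → HasDerivAt Φ₀ (Φ₀' s) s)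
    (hΦ₀'fin : (∫⁻ s in Ioi (0:ℝ), ENNReal.ofReal ((ε^2)⁻¹ * μ (s/ε) * ‖Φ₀' s‖^2)) < ⊤)
    (D : ℝ → ℝ → H)
    (hD1 : ∀ t : ℝ, 0 ≤ t → ∀ s : ℝ, 0 < s → s ≤ t → D t s = U (t - s))
    (hD2 : ∀ t : ℝ, 0 ≤ t → ∀ s : ℝ, t < s → D t s = Φ₀' (s - t)) :
    ∀ t : ℝ, 0 ≤ t →
      ENNReal.ofReal ε *
          (∫⁻ s in Ioi (0:ℝ), ENNReal.ofReal ((ε^2)⁻¹ * μ (s/ε) * ‖D t s‖^2))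
        ≤ ENNReal.ofReal (ε * Real.exp (-δ * t)) *
              (∫⁻ s in Ioi (0:ℝ), ENNReal.ofReal ((ε^2)⁻¹ * μ (s/ε) * ‖Φ₀' s‖^2))
            + ENNReal.ofReal (ρ^2 * ∫ s in Ioi (0:ℝ), μ s) := by
  intro t ht
  obtain ⟨hε0, hε1⟩ := hε
  have hsplit : Ioi (0:ℝ) = Ioc 0 t ∪ Ioi t := (Ioc_union_Ioi_eq_Ioi ht).symm
  have hA : ENNReal.ofReal ε *
      (∫⁻ s in Ioc (0:ℝ) t, ENNReal.ofReal ((ε^2)⁻¹ * μ (s/ε) * ‖D t s‖^2))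
      ≤ ENNReal.ofReal (ρ^2 * ∫ s in Ioi (0:ℝ), μ s) := by
    have h1 : (∫⁻ s in Ioc (0:ℝ) t, ENNReal.ofReal ((ε^2)⁻¹ * μ (s/ε) * ‖D t s‖^2))
        ≤ ∫⁻ s in Ioi (0:ℝ), ENNReal.ofReal ((ε^2)⁻¹ * μ (s/ε) * ρ^2) := by
      refine (setLIntegral_mono' measurableSet_Ioc ?_).trans
        (lintegral_mono_set Ioc_subset_Ioi_self)
      intro s hs
      apply ENNReal.ofReal_le_ofReal
      rw [hD1 t ht s hs.1 hs.2]
      have := hU (t - s) (by linarith [hs.2])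
      have := hμnonneg (s/ε) (div_pos hs.1 hε0)
      gcongr
    have hint : IntegrableOn (fun s => μ (s/ε)) (Ioi 0) := by
      have := (integrableOn_Ioi_comp_mul_right_iff μ 0 (inv_pos.2 hε0)).2 (by simpa using hμint)
      simpa [div_eq_mul_inv] using this
    have h2 : (∫⁻ s in Ioi (0:ℝ), ENNReal.ofReal ((ε^2)⁻¹ * μ (s/ε) * ρ^2))
        = ENNReal.ofReal (∫ s in Ioi (0:ℝ), (ε^2)⁻¹ * μ (s/ε) * ρ^2) := by
      rw [ofReal_integral_eq_lintegral_ofReal]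
      · exact (hint.const_mul _).mul_const _
      · refine (ae_restrict_iff' measurableSet_Ioi).2 (Filter.Eventually.of_forall ?_)
        intro s hs
        have := hμnonneg (s/ε) (div_pos hs hε0)
        simp only [Pi.zero_apply]
        positivity
    have h3 : (∫ s in Ioi (0:ℝ), μ (s/ε)) = ε * ∫ s in Ioi (0:ℝ), μ s := by
      have := integral_comp_mul_right_Ioi μ 0 (inv_pos.2 hε0)
      simpa [div_eq_mul_inv] using this
    have h4 : (∫ s in Ioi (0:ℝ), (ε^2)⁻¹ * μ (s/ε) * ρ^2)
        = (ε^2)⁻¹ * (ε * ∫ s in Ioi (0:ℝ), μ s) * ρ^2 := by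
      rw [integral_mul_const, integral_const_mul, h3]
    refine (mul_le_mul_right h1 _).trans ?_
    rw [h2, h4, ← ENNReal.ofReal_mul hε0.le]
    apply le_of_eq
    congr 1
    field_simp
  have hB : (∫⁻ s in Ioi t, ENNReal.ofReal ((ε^2)⁻¹ * μ (s/ε) * ‖D t s‖^2))
      ≤ ENNReal.ofReal (Real.exp (-δ * t)) *
        (∫⁻ s in Ioi (0:ℝ), ENNReal.ofReal ((ε^2)⁻¹ * μ (s/ε) * ‖Φ₀' s‖^2)) := by
    have h1 := (measurePreserving_add_right (volume : Measure ℝ) t).setLIntegral_comp_preimage_emb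
      (measurableEmbedding_addRight t)
      (fun s => ENNReal.ofReal ((ε^2)⁻¹ * μ (s/ε) * ‖D t s‖^2)) (Ioi t)
    have h2 : (fun x : ℝ => x + t) ⁻¹' (Ioi t) = Ioi 0 := by
      ext x; simp
    rw [h2] at h1
    rw [← h1, ← lintegral_const_mul' _ _ ENNReal.ofReal_ne_top]
    refine setLIntegral_mono' measurableSet_Ioi ?_
    intro s hs
    have hs : 0 < s := hs
    rw [← ENNReal.ofReal_mul (Real.exp_pos _).le]
    apply ENNReal.ofReal_le_ofReal
    rw [hD2 t ht (s + t) (by linarith), add_sub_cancel_right, add_div]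
    have h3 := kernel_exp_decay δ μ hμC1 hμdecay (s/ε) (t/ε) (div_pos hs hε0) (by positivity)
    have h5 : t ≤ t / ε := by
      rw [le_div_iff₀ hε0]; nlinarith
    have h4 : Real.exp (-δ * (t/ε)) ≤ Real.exp (-δ * t) := by
      apply Real.exp_le_exp.2
      nlinarith
    have h6 := h3.trans (mul_le_mul_of_nonneg_right h4 (hμnonneg (s/ε) (div_pos hs hε0)))
    calc (ε^2)⁻¹ * μ (s/ε + t/ε) * ‖Φ₀' s‖^2
        ≤ (ε^2)⁻¹ * (Real.exp (-δ * t) * μ (s/ε)) * ‖Φ₀' s‖^2 := by gcongr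
      _ = _ := by ring
  calc _ ≤ ENNReal.ofReal ε *
        ((∫⁻ s in Ioc (0:ℝ) t, ENNReal.ofReal ((ε^2)⁻¹ * μ (s/ε) * ‖D t s‖^2))
        + ∫⁻ s in Ioi t, ENNReal.ofReal ((ε^2)⁻¹ * μ (s/ε) * ‖D t s‖^2)) := by
          conv_lhs => rw [hsplit]
          exact mul_le_mul_right (lintegral_union_le _ _ _) _
    _ ≤ _ := by
          rw [mul_add, add_comm, ENNReal.ofReal_mul hε0.le, mul_assoc]
          exact add_le_add (mul_le_mul_right hB _) hA
end

section
/- Let H be a real Hilbert space, ε ∈ (0,1], ρ > 0, and let U : [0,∞) → H satisfy ‖U(t)‖_H ≤ ρ for all t ≥ 0. Let Φ₀ : (0,∞) → H be measurable with sup_{τ≥1} τ·𝕋_ε(τ; Φ₀) < ∞, and let Φ^t be the integrated past history generated by U and Φ₀. Then there exists a constant C > 0, depending only on μ and δ (and in particular independent of ε, t, ρ, U and Φ₀), such that for all t ≥ 0, sup_{τ≥1} τ·𝕋_ε(τ; Φ^t) ≤ 2(t+2) e^{−δ t} · sup_{τ≥1} τ·𝕋_ε(τ; Φ₀) + C ρ².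 -/
open MeasureTheory Real Set ENNReal

/-- The tail function `𝕋_ε(τ; Φ) = ∫_{(0,1/τ) ∪ (τ,∞)} ε μ_ε(s) ‖Φ(s)‖² ds`,
with `μ_ε(s) = ε⁻² μ(s/ε)`. -/
noncomputable def tailFn {H : Type*} [NormedAddCommGroup H]
    (μ : ℝ → ℝ) (ε : ℝ) (Φ : ℝ → H) (τ : ℝ) : ℝ≥0∞ :=
  ∫⁻ s in Ioo (0:ℝ) (1/τ) ∪ Ioi τ,
    ENNReal.ofReal (ε * ((ε^2)⁻¹ * μ (s/ε)) * ‖Φ s‖^2)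

/-- `sup_{τ ≥ 1} τ · 𝕋_ε(τ; Φ)`. -/
noncomputable def tailSup {H : Type*} [NormedAddCommGroup H]
    (μ : ℝ → ℝ) (ε : ℝ) (Φ : ℝ → H) : ℝ≥0∞ :=
  ⨆ (τ : ℝ) (_ : 1 ≤ τ), ENNReal.ofReal τ * tailFn μ ε Φ τ

/-- The integrated past history generated by a trajectory `U` and a past-history
datum `Φ₀`: `Φ^t(s) = ∫₀ˢ U(t-y) dy` for `0 < s ≤ t` and
`Φ^t(s) = Φ₀(s-t) + ∫₀ᵗ U(t-y) dy` for `s > t`. -/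
noncomputable def pastHistory {H : Type*} [NormedAddCommGroup H] [NormedSpace ℝ H]
    (U : ℝ → H) (Φ₀ : ℝ → H) (t s : ℝ) : H :=
  if s ≤ t then ∫ y in (0:ℝ)..s, U (t - y)
  else Φ₀ (s - t) + ∫ y in (0:ℝ)..t, U (t - y)


lemma aux_exp_decay (δ : ℝ) (μ : ℝ → ℝ)
    (hμC1 : ContDiffOn ℝ 1 μ (Ioi 0))
    (hμdecay : ∀ s : ℝ, 0 < s → deriv μ s + δ * μ s ≤ 0)
    (s t : ℝ) (hs : 0 < s) (ht : 0 ≤ t) : μ (s + t) ≤ Real.exp (-δ * t) * μ s := by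
  have hd : ∀ x : ℝ, 0 < x → HasDerivAt μ (deriv μ x) x := fun x hx =>
    ((hμC1.differentiableOn (by norm_num)).differentiableAt (Ioi_mem_nhds hx)).hasDerivAt
  have hg : ∀ x : ℝ, 0 < x → HasDerivAt (fun x => Real.exp (δ * x) * μ x)
      (Real.exp (δ * x) * (δ * 1) * μ x + Real.exp (δ * x) * deriv μ x) x := fun x hx =>
    (((hasDerivAt_id x).const_mul δ).exp).mul (hd x hx)
  have hanti : AntitoneOn (fun x => Real.exp (δ * x) * μ x) (Ioi 0) := by
    apply antitoneOn_of_deriv_nonpos (convex_Ioi 0)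
    · exact fun x hx => (hg x hx).continuousAt.continuousWithinAt
    · intro x hx
      rw [interior_Ioi] at hx
      exact (hg x hx).differentiableAt.differentiableWithinAt
    · intro x hx
      rw [interior_Ioi] at hx
      rw [(hg x hx).deriv]
      have h1 := hμdecay x hx
      have h2 := Real.exp_pos (δ * x)
      nlinarith
  have h := hanti (show s ∈ Ioi (0:ℝ) from hs) (show s + t ∈ Ioi (0:ℝ) from by
    simp only [mem_Ioi]; linarith) (by linarith)
  simp only at h
  have h3 : μ (s + t) = Real.exp (-(δ * (s + t))) * (Real.exp (δ * (s + t)) * μ (s + t)) := by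
    rw [← mul_assoc, ← Real.exp_add]; simp
  rw [h3]
  refine (mul_le_mul_of_nonneg_left h (Real.exp_pos _).le).trans (le_of_eq ?_)
  rw [← mul_assoc, ← Real.exp_add]
  congr 2
  ring

lemma aux_poly (c : ℝ) (hc : 0 < c) (x : ℝ) (hx : 0 ≤ x) :
    (x + x ^ 3) * Real.exp (-(c * x)) ≤ 1 / c + 6 / c ^ 3 := by
  have h1 : c * x ≤ Real.exp (c * x) := by linarith [Real.add_one_le_exp (c * x)]
  have h3 := Real.pow_div_factorial_le_exp (c * x) (by positivity) 3
  have h3' : (c * x) ^ 3 ≤ 6 * Real.exp (c * x) := by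
    norm_num [Nat.factorial] at h3
    linarith
  have : x + x ^ 3 ≤ (1 / c + 6 / c ^ 3) * Real.exp (c * x) := by
    have e1 : x = (1 / c) * (c * x) := by field_simp
    have e3 : x ^ 3 = (1 / c ^ 3) * (c * x) ^ 3 := by field_simp
    have a1 : x ≤ (1 / c) * Real.exp (c * x) := by
      calc x = (1 / c) * (c * x) := e1
        _ ≤ _ := by gcongr
    have a3 : x ^ 3 ≤ (6 / c ^ 3) * Real.exp (c * x) := by
      calc x ^ 3 = (1 / c ^ 3) * (c * x) ^ 3 := e3
        _ ≤ (1 / c ^ 3) * (6 * Real.exp (c * x)) := by gcongr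
        _ = _ := by ring
    linarith
  calc (x + x ^ 3) * Real.exp (-(c * x))
      ≤ ((1 / c + 6 / c ^ 3) * Real.exp (c * x)) * Real.exp (-(c * x)) := by gcongr
    _ = 1 / c + 6 / c ^ 3 := by rw [mul_assoc, ← Real.exp_add]; simp

lemma aux_pastHistory {H : Type*} [NormedAddCommGroup H] [NormedSpace ℝ H]
    (U Φ₀ : ℝ → H) (ρ : ℝ) (hρ : 0 < ρ) (hU : ∀ t : ℝ, 0 ≤ t → ‖U t‖ ≤ ρ)
    (t s : ℝ) (ht : 0 ≤ t) (hs : 0 < s) :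
    ‖pastHistory U Φ₀ t s‖ ^ 2 ≤
      (if t < s then 2 * ‖Φ₀ (s - t)‖ ^ 2 else 0) + 2 * ρ ^ 2 * s ^ 2 := by
  have key : ∀ r, 0 ≤ r → r ≤ t → ‖∫ y in (0:ℝ)..r, U (t - y)‖ ≤ ρ * r := by
    intro r hr hrt
    have := intervalIntegral.norm_integral_le_of_norm_le_const (a := (0:ℝ)) (b := r)
      (f := fun y => U (t - y)) (C := ρ) (by
        intro x hx
        rw [uIoc_of_le hr] at hx
        exact hU _ (by linarith [hx.2]))
    simpa [abs_of_nonneg hr] using this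
  unfold pastHistory
  by_cases h : s ≤ t
  · rw [if_pos h, if_neg (not_lt.2 h)]
    have h1 := key s hs.le h
    have h2 := pow_le_pow_left₀ (norm_nonneg _) h1 2
    nlinarith [sq_nonneg (ρ * s)]
  · rw [if_neg h, if_pos (not_le.1 h)]
    have h1 := key t ht le_rfl
    have h0 := norm_add_le (Φ₀ (s - t)) (∫ y in (0:ℝ)..t, U (t - y))
    have h4 : ρ * t ≤ ρ * s := by
      have := not_le.1 h
      gcongr
    have h5 : ‖Φ₀ (s - t) + ∫ y in (0:ℝ)..t, U (t - y)‖ ≤ ‖Φ₀ (s - t)‖ + ρ * s := by linarith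
    have h6 := pow_le_pow_left₀ (norm_nonneg _) h5 2
    nlinarith [sq_nonneg (‖Φ₀ (s - t)‖ - ρ * s)]

/-- second term -/
lemma aux_second (δ : ℝ) (hδ : 0 < δ) (μ : ℝ → ℝ)
    (hμnonneg : ∀ s : ℝ, 0 < s → 0 ≤ μ s)
    (hμC1 : ContDiffOn ℝ 1 μ (Ioi 0))
    (hμint : IntegrableOn μ (Ioi 0))
    (hμdecay : ∀ s : ℝ, 0 < s → deriv μ s + δ * μ s ≤ 0)
    (ε : ℝ) (hε : ε ∈ Ioc (0:ℝ) 1) (τ : ℝ) (hτ : 1 ≤ τ) :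
    ENNReal.ofReal τ * ∫⁻ s in Ioo (0:ℝ) (1/τ) ∪ Ioi τ,
      ENNReal.ofReal (ε * ((ε^2)⁻¹ * μ (s/ε)) * s ^ 2) ≤
    ENNReal.ofReal (2 * (1 / (δ/2) + 6 / (δ/2) ^ 3) * ∫ s in Ioi (0:ℝ), μ s) := by
  obtain ⟨hε0, hε1⟩ := hε
  set M := 1 / (δ/2) + 6 / (δ/2) ^ 3 with hM
  have hM0 : 0 < M := by positivity
  have hτ0 : 0 < τ := by linarith
  have hsub : Ioo (0:ℝ) (1/τ) ∪ Ioi τ ⊆ Ioi 0 := by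
    rintro s (hs | hs)
    · exact hs.1
    · exact hτ0.trans hs
  have hmeas : MeasurableSet (Ioo (0:ℝ) (1/τ) ∪ Ioi τ) := measurableSet_Ioo.union measurableSet_Ioi
  have hb : (0:ℝ) < (2 * ε)⁻¹ := by positivity
  have hI : IntegrableOn (fun s => ε⁻¹ * M * μ ((2 * ε)⁻¹ * s)) (Ioi 0) := by
    apply Integrable.const_mul
    have := (integrableOn_Ioi_comp_mul_left_iff μ 0 hb).2 (by simpa using hμint)
    exact this
  rw [← lintegral_const_mul' _ _ ENNReal.ofReal_ne_top]
  calc ∫⁻ s in Ioo (0:ℝ) (1/τ) ∪ Ioi τ,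
      ENNReal.ofReal τ * ENNReal.ofReal (ε * ((ε^2)⁻¹ * μ (s/ε)) * s ^ 2)
      ≤ ∫⁻ s in Ioo (0:ℝ) (1/τ) ∪ Ioi τ, ENNReal.ofReal (ε⁻¹ * M * μ ((2 * ε)⁻¹ * s)) := by
        apply setLIntegral_mono' hmeas
        intro s hs
        have hs0 : 0 < s := hsub hs
        rw [← ENNReal.ofReal_mul hτ0.le]
        apply ENNReal.ofReal_le_ofReal
        have hx0 : 0 < s / ε := by positivity
        have hpoly : τ * s ^ 2 ≤ s + s ^ 3 := by
          rcases hs with hs | hs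
          · have h1 : s * τ < 1 := (lt_div_iff₀ hτ0).1 hs.2
            nlinarith [pow_pos hs0 3]
          · have h1 : τ < s := hs
            nlinarith [pow_pos hs0 2]
        have hsx : s ≤ s / ε := by
          rw [le_div_iff₀ hε0]; nlinarith
        have hpoly2 : s + s ^ 3 ≤ s / ε + (s / ε) ^ 3 := by gcongr
        have hdec := aux_exp_decay δ μ hμC1 hμdecay (s / ε / 2) (s / ε / 2) (by positivity)
          (by positivity)
        rw [add_halves] at hdec
        have harg : s / ε / 2 = (2 * ε)⁻¹ * s := by field_simp
        have hp := aux_poly (δ / 2) (by positivity) (s / ε) hx0.le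
        have hmu0 := hμnonneg (s / ε) hx0
        have hmu1 := hμnonneg (s / ε / 2) (by positivity)
        have hexp : Real.exp (-δ * (s / ε / 2)) = Real.exp (-(δ / 2 * (s / ε))) := by
          congr 1; ring
        rw [hexp] at hdec
        calc τ * (ε * ((ε^2)⁻¹ * μ (s/ε)) * s ^ 2) = ε⁻¹ * ((τ * s ^ 2) * μ (s / ε)) := by
              field_simp
          _ ≤ ε⁻¹ * ((s / ε + (s / ε) ^ 3) *
                (Real.exp (-(δ / 2 * (s / ε))) * μ (s / ε / 2))) := by
              have := hpoly.trans hpoly2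
              gcongr
          _ = ε⁻¹ * (((s / ε + (s / ε) ^ 3) * Real.exp (-(δ / 2 * (s / ε)))) *
                μ (s / ε / 2)) := by ring
          _ ≤ ε⁻¹ * (M * μ (s / ε / 2)) := by gcongr
          _ = ε⁻¹ * M * μ ((2 * ε)⁻¹ * s) := by rw [harg]; ring
    _ ≤ ∫⁻ s in Ioi (0:ℝ), ENNReal.ofReal (ε⁻¹ * M * μ ((2 * ε)⁻¹ * s)) :=
        lintegral_mono_set hsub
    _ = ENNReal.ofReal (∫ s in Ioi (0:ℝ), ε⁻¹ * M * μ ((2 * ε)⁻¹ * s)) := by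
        rw [ofReal_integral_eq_lintegral_ofReal hI]
        refine (ae_restrict_iff' measurableSet_Ioi).2 (Filter.Eventually.of_forall fun s hs => ?_)
        have hs0 : (0:ℝ) < s := hs
        have := hμnonneg ((2 * ε)⁻¹ * s) (by positivity)
        simp only [Pi.zero_apply]
        positivity
    _ = ENNReal.ofReal (2 * M * ∫ s in Ioi (0:ℝ), μ s) := by
        rw [integral_const_mul, integral_comp_mul_left_Ioi μ 0 hb]
        congr 1
        simp only [mul_zero, smul_eq_mul, inv_inv]
        field_simp

/-- first term -/
lemma aux_first {H : Type*} [NormedAddCommGroup H]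
    (δ : ℝ) (hδ : 0 < δ) (μ : ℝ → ℝ)
    (hμnonneg : ∀ s : ℝ, 0 < s → 0 ≤ μ s)
    (hμC1 : ContDiffOn ℝ 1 μ (Ioi 0))
    (hμdecay : ∀ s : ℝ, 0 < s → deriv μ s + δ * μ s ≤ 0)
    (ε : ℝ) (hε : ε ∈ Ioc (0:ℝ) 1) (τ : ℝ) (hτ : 1 ≤ τ) (Φ₀ : ℝ → H) (t : ℝ) (ht : 0 ≤ t) :
    ENNReal.ofReal τ * ∫⁻ s in Ioo (0:ℝ) (1/τ) ∪ Ioi τ,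
      ENNReal.ofReal (ε * ((ε^2)⁻¹ * μ (s/ε)) * (if t < s then 2 * ‖Φ₀ (s - t)‖ ^ 2 else 0)) ≤
    ENNReal.ofReal (2 * (t + 2) * Real.exp (-δ * t)) * tailSup μ ε Φ₀ := by
  obtain ⟨hε0, hε1⟩ := hε
  have hτ0 : 0 < τ := by linarith
  have hmeas : MeasurableSet (Ioo (0:ℝ) (1/τ) ∪ Ioi τ) := measurableSet_Ioo.union measurableSet_Ioi
  set τ' := max 1 (τ - t) with hτ'
  have hτ'1 : 1 ≤ τ' := le_max_left _ _
  have hτ'2 : τ - t ≤ τ' := le_max_right _ _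
  have hτ'0 : 0 < τ' := by linarith
  have hτ'τ : τ' ≤ τ := max_le hτ (by linarith)
  have hττ : τ ≤ (t + 2) * τ' := by nlinarith
  set F : ℝ → ℝ≥0∞ := fun s => ENNReal.ofReal (ε * ((ε^2)⁻¹ * μ (s/ε)) * ‖Φ₀ s‖^2) with hF
  set A' := Ioo (0:ℝ) (1/τ') ∪ Ioi τ' with hA'
  have hmeas' : MeasurableSet A' := measurableSet_Ioo.union measurableSet_Ioi
  set c := ENNReal.ofReal (2 * Real.exp (-δ * t)) with hc
  have hkey : ∫⁻ s in Ioo (0:ℝ) (1/τ) ∪ Ioi τ,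
      ENNReal.ofReal (ε * ((ε^2)⁻¹ * μ (s/ε)) * (if t < s then 2 * ‖Φ₀ (s - t)‖ ^ 2 else 0))
      ≤ c * tailFn μ ε Φ₀ τ' := by
    unfold tailFn
    rw [← lintegral_indicator hmeas, ← lintegral_indicator hmeas',
      ← lintegral_const_mul' _ _ ENNReal.ofReal_ne_top,
      ← lintegral_sub_right_eq_self (fun s => c * A'.indicator F s) t]
    apply lintegral_mono_ae
    have hne : ∀ᵐ s : ℝ, s ≠ τ' + t := by
      simp [ae_iff]
    filter_upwards [hne] with s hsne
    by_cases hs : s ∈ Ioo (0:ℝ) (1/τ) ∪ Ioi τ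
    swap
    · rw [indicator_of_notMem hs]; exact zero_le
    rw [indicator_of_mem hs]
    by_cases hts : t < s
    swap
    · rw [if_neg hts]; simp
    rw [if_pos hts]
    have hst : 0 < s - t := by linarith
    have hmem : s - t ∈ A' := by
      rcases hs with hs | hs
      · left
        refine ⟨hst, ?_⟩
        have : 1 / τ ≤ 1 / τ' := one_div_le_one_div_of_le hτ'0 hτ'τ
        linarith [hs.2]
      · have hs' : τ < s := hs
        rcases le_total 1 (τ - t) with h | h
        · right
          rw [mem_Ioi, hτ', max_eq_right h]; linarith
        · have h1 : τ' = 1 := max_eq_left h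
          rw [hA', h1]
          rw [h1] at hsne
          rcases lt_or_gt_of_ne hsne with h2 | h2
          · left; exact ⟨hst, by norm_num; linarith⟩
          · right; rw [mem_Ioi]; linarith
    rw [indicator_of_mem hmem, hF, hc, ← ENNReal.ofReal_mul (by positivity)]
    apply ENNReal.ofReal_le_ofReal
    have hdec := aux_exp_decay δ μ hμC1 hμdecay ((s - t) / ε) (t / ε) (by positivity)
      (by positivity)
    have e1 : (s - t) / ε + t / ε = s / ε := by ring
    rw [e1] at hdec
    have hte : t ≤ t / ε := by
      rw [le_div_iff₀ hε0]; nlinarith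
    have hexp : Real.exp (-δ * (t / ε)) ≤ Real.exp (-δ * t) := by
      apply Real.exp_le_exp.2; nlinarith
    have hmu := hμnonneg ((s - t) / ε) (by positivity)
    have hdec2 : μ (s / ε) ≤ Real.exp (-δ * t) * μ ((s - t) / ε) :=
      hdec.trans (by gcongr)
    calc ε * ((ε^2)⁻¹ * μ (s/ε)) * (2 * ‖Φ₀ (s - t)‖ ^ 2)
        ≤ ε * ((ε^2)⁻¹ * (Real.exp (-δ * t) * μ ((s - t) / ε))) * (2 * ‖Φ₀ (s - t)‖ ^ 2) := by
          gcongr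
      _ = _ := by ring
  calc _ ≤ ENNReal.ofReal τ * (c * tailFn μ ε Φ₀ τ') := by gcongr
    _ ≤ ENNReal.ofReal ((t + 2) * τ') * (c * tailFn μ ε Φ₀ τ') := by gcongr
    _ = ENNReal.ofReal (2 * (t + 2) * Real.exp (-δ * t)) *
          (ENNReal.ofReal τ' * tailFn μ ε Φ₀ τ') := by
        have : 2 * (t + 2) * Real.exp (-δ * t) = (t + 2) * (2 * Real.exp (-δ * t)) := by ring
        rw [this, ENNReal.ofReal_mul (by positivity), ENNReal.ofReal_mul (by positivity), hc]
        ring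
    _ ≤ _ := by
        gcongr
        exact le_iSup₂ (f := fun (τ : ℝ) (_ : 1 ≤ τ) => ENNReal.ofReal τ * tailFn μ ε Φ₀ τ) τ' hτ'1

/-- **Decay of the tail of the integrated past history.**
With memory kernel `μ` (nonnegative, nonincreasing, `C¹`, integrable on `(0,∞)`,
`μ' + δμ ≤ 0`), there is a constant `C > 0` depending only on `μ` and `δ`
(independent of `ε`, `t`, `ρ`, `U`, `Φ₀` and the Hilbert space `H`) such that for any
trajectory `U` bounded by `ρ` and any datum `Φ₀` with finite tail supremum, the
integrated past history `Φ^t` satisfies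
`sup_{τ≥1} τ 𝕋_ε(τ; Φ^t) ≤ 2(t+2) e^{-δt} sup_{τ≥1} τ 𝕋_ε(τ; Φ₀) + C ρ²`. -/
theorem tail_function_decay
    (δ : ℝ) (hδ : 0 < δ)
    (μ : ℝ → ℝ)
    (hμnonneg : ∀ s : ℝ, 0 < s → 0 ≤ μ s)
    (hμanti : ∀ s t : ℝ, 0 < s → s ≤ t → μ t ≤ μ s)
    (hμC1 : ContDiffOn ℝ 1 μ (Ioi 0))
    (hμint : IntegrableOn μ (Ioi 0))
    (hμdecay : ∀ s : ℝ, 0 < s → deriv μ s + δ * μ s ≤ 0) :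
    ∃ C : ℝ, 0 < C ∧
      ∀ (H : Type) [inst1 : NormedAddCommGroup H] [inst2 : InnerProductSpace ℝ H]
        [inst3 : CompleteSpace H] [inst4 : MeasurableSpace H] [inst5 : BorelSpace H],
      ∀ ε : ℝ, ε ∈ Ioc (0:ℝ) 1 →
      ∀ ρ : ℝ, 0 < ρ →
      ∀ U : ℝ → H, (∀ t : ℝ, 0 ≤ t → ‖U t‖ ≤ ρ) →
      ∀ Φ₀ : ℝ → H, Measurable Φ₀ → tailSup μ ε Φ₀ < ⊤ →
      ∀ t : ℝ, 0 ≤ t →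
        tailSup μ ε (pastHistory U Φ₀ t)
          ≤ ENNReal.ofReal (2 * (t + 2) * Real.exp (-δ * t)) * tailSup μ ε Φ₀
              + ENNReal.ofReal (C * ρ^2) := by
  have hI0 : 0 ≤ ∫ s in Ioi (0:ℝ), μ s :=
    setIntegral_nonneg measurableSet_Ioi fun s hs => hμnonneg s hs
  set B := 2 * (1 / (δ/2) + 6 / (δ/2) ^ 3) * ∫ s in Ioi (0:ℝ), μ s with hB
  have hB0 : 0 ≤ B := by positivity
  refine ⟨2 * B + 1, by positivity, ?_⟩
  intro H _ _ _ _ _ ε hε ρ hρ U hU Φ₀ _ _ t ht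
  have hε0 : 0 < ε := hε.1
  refine iSup₂_le fun τ hτ => ?_
  have hτ0 : 0 < τ := by linarith
  have hsub : Ioo (0:ℝ) (1/τ) ∪ Ioi τ ⊆ Ioi 0 := by
    rintro s (hs | hs)
    · exact hs.1
    · exact hτ0.trans hs
  have hmeas : MeasurableSet (Ioo (0:ℝ) (1/τ) ∪ Ioi τ) := measurableSet_Ioo.union measurableSet_Ioi
  have h1 := aux_first δ hδ μ hμnonneg hμC1 hμdecay ε hε τ hτ Φ₀ t ht
  have h2 := aux_second δ hδ μ hμnonneg hμC1 hμint hμdecay ε hε τ hτ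
  rw [← hB] at h2
  have hsplit : tailFn μ ε (pastHistory U Φ₀ t) τ ≤
      (∫⁻ s in Ioo (0:ℝ) (1/τ) ∪ Ioi τ,
        ENNReal.ofReal (ε * ((ε^2)⁻¹ * μ (s/ε)) *
          (if t < s then 2 * ‖Φ₀ (s - t)‖ ^ 2 else 0))) +
      ENNReal.ofReal (2 * ρ ^ 2) * ∫⁻ s in Ioo (0:ℝ) (1/τ) ∪ Ioi τ,
        ENNReal.ofReal (ε * ((ε^2)⁻¹ * μ (s/ε)) * s ^ 2) := by
    unfold tailFn
    rw [← lintegral_const_mul' _ _ ENNReal.ofReal_ne_top, ← lintegral_add_right']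
    · apply setLIntegral_mono' hmeas
      intro s hs
      have hs0 : 0 < s := hsub hs
      have hmu := hμnonneg (s / ε) (by positivity)
      rw [← ENNReal.ofReal_mul (by positivity),
        ← ENNReal.ofReal_add (by split_ifs <;> positivity) (by positivity)]
      apply ENNReal.ofReal_le_ofReal
      have hp := aux_pastHistory U Φ₀ ρ hρ hU t s ht hs0
      refine (mul_le_mul_of_nonneg_left hp (by positivity)).trans (le_of_eq ?_)
      ring
    · apply AEMeasurable.const_mul
      apply AEMeasurable.ennreal_ofReal
      apply ContinuousOn.aemeasurable _ hmeas
      have hcomp : ContinuousOn (fun s => μ (s / ε)) (Ioo (0:ℝ) (1/τ) ∪ Ioi τ) := by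
        apply hμC1.continuousOn.comp (by fun_prop)
        intro s hs
        have hs0 : 0 < s := hsub hs
        show 0 < s / ε
        positivity
      exact (continuousOn_const.mul (continuousOn_const.mul hcomp)).mul
        (continuous_pow 2).continuousOn
  calc _ ≤ ENNReal.ofReal τ * (_ + _) := mul_le_mul_right hsplit _
    _ ≤ _ := by
      rw [mul_add]
      refine add_le_add h1 ?_
      rw [mul_left_comm]
      refine (mul_le_mul_right h2 _).trans ?_
      rw [← ENNReal.ofReal_mul (by positivity)]
      apply ENNReal.ofReal_le_ofReal
      nlinarith [sq_nonneg ρ]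
end
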